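/- arXiv:1509.08136 — 3 statements merged into one kernel-verified Lean document; each statement's English description precedes it below -/
import Mathlib

section
/- Every finite subgroup of odd order of PGL(3, ℝ) is cyclic. -/
open Matrix

/-- The projective general linear group `PGL(n, R)`: the quotient of `GL(n, R)`
by its center (the scalar matrices). -/
abbrev PGL (n : ℕ) (R : Type*) [CommRing R] : Type _ :=
  GL (Fin n) R ⧸ Subgroup.center (GL (Fin n) R)

/-!
Since cubing is a bijection of `ℝˣ`, the map `SL(3, ℝ) → PGL(3, ℝ)` is an isomorphism, so it
suffices to treat a faithful representation `V` of dimension three of a group `G` of odd order.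
Its determinant is trivial, so `χ(g²) = χ(g)² - 2 χ(g⁻¹)`. Squaring and inversion permute `G`;
summing over `G` gives `3 ∑ χ(g) = ∑ χ(g)² > 0`, hence `G` fixes a line `L` pointwise. Elements of
`G` acting trivially on `V ⧸ L` are unipotent of finite order, hence trivial, so the plane `V ⧸ L`
is a faithful representation. For an invariant inner product `G` acts on it by rotations, and a
finite group of rotations is a finite subgroup of `ℂˣ`.
-/

open Module Function
open Matrix.SpecialLinearGroup (toPGL)

section ProjectiveLinear

theorem pow_bijective_units_real {n : ℕ} (hn : Odd n) : Bijective fun u : ℝˣ => u ^ n := by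
  have exists_root (x : ℝ) : ∃ y, y ^ n = x := by
    rcases le_total 0 x with hx | hx
    · exact ⟨x ^ (n⁻¹ : ℝ), Real.rpow_inv_natCast_pow hx hn.pos.ne'⟩
    · refine ⟨-(-x) ^ (n⁻¹ : ℝ), ?_⟩
      rw [hn.neg_pow, Real.rpow_inv_natCast_pow (neg_nonneg.2 hx) hn.pos.ne', neg_neg]
  refine ⟨fun u v huv => Units.ext (hn.pow_injective congr(($huv : ℝ))), fun u => ?_⟩
  obtain ⟨y, hy⟩ := exists_root u
  have hy0 : y ≠ 0 := by
    rintro rfl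
    exact u.ne_zero (by rw [← hy, zero_pow hn.pos.ne'])
  exact ⟨Units.mk0 y hy0, Units.ext hy⟩

theorem bijective_toPGL_of_bijective_pow {n R : Type*} [Fintype n] [DecidableEq n] [CommRing R]
    (h : Bijective fun u : Rˣ => u ^ Fintype.card n) :
    Bijective (toPGL : SpecialLinearGroup n R →* ProjGenLinGroup n R) := by
  constructor
  · rw [← MonoidHom.ker_eq_bot_iff, Matrix.SpecialLinearGroup.toPGL_ker, eq_bot_iff]
    intro A hA
    cases isEmpty_or_nonempty n
    · exact Subsingleton.elim _ _
    obtain ⟨r, hr, hrA⟩ := Matrix.SpecialLinearGroup.mem_center_iff.1 hA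
    have hr1 : Units.ofPowEqOne r _ hr Fintype.card_ne_zero = 1 :=
      h.injective (by simp)
    obtain rfl : r = 1 := congr(($hr1 : R))
    exact Subtype.ext (hrA.symm.trans (map_one _))
  · exact (ProjectiveSpecialLinearGroup.toPGL_surj_of_roots h.surjective).comp
      (QuotientGroup.mk'_surjective _)

end ProjectiveLinear

section OddOrder

theorem trace_sq_fin_three {R : Type*} [CommRing R] (M : Matrix (Fin 3) (Fin 3) R) :
    (M ^ 2).trace = M.trace ^ 2 - 2 * M.adjugate.trace := by
  simp only [sq, trace_fin_three, mul_apply, Fin.sum_univ_three, adjugate_fin_three, of_apply,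
    cons_val]
  ring

variable {k G V : Type*} [Field k] [Group G] [AddCommGroup V] [Module k V]

theorem character_sq_of_finrank_eq_three (ρ : Representation k G V) (hV : finrank k V = 3) {g : G}
    (hg : LinearMap.det (ρ g) = 1) :
    ρ.character (g ^ 2) = ρ.character g ^ 2 - 2 * ρ.character g⁻¹ := by
  have : FiniteDimensional k V := .of_finrank_pos (by lia)
  let b := finBasisOfFinrankEq k V hV
  have trace_eq (x : G) : ρ.character x = (LinearMap.toMatrixAlgEquiv b (ρ x)).trace :=
    LinearMap.trace_eq_matrix_trace k b _
  have adjugate_eq : (LinearMap.toMatrixAlgEquiv b (ρ g)).adjugate =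
      LinearMap.toMatrixAlgEquiv b (ρ g⁻¹) := by
    have hdet : (LinearMap.toMatrixAlgEquiv b (ρ g)).det = 1 :=
      (LinearMap.det_toMatrix b _).trans hg
    have hmul : LinearMap.toMatrixAlgEquiv b (ρ g) * LinearMap.toMatrixAlgEquiv b (ρ g⁻¹) = 1 := by
      rw [← map_mul, ← map_mul, mul_inv_cancel, map_one, map_one]
    rw [← inv_eq_right_inv hmul, inv_def, hdet, Ring.inverse_one, one_smul]
  rw [trace_eq, trace_eq, trace_eq, map_pow, map_pow, trace_sq_fin_three, adjugate_eq]

variable [LinearOrder k] [IsStrictOrderedRing k]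

theorem det_eq_one_of_odd_card (ρ : Representation k G V) (hG : Odd (Nat.card G)) (g : G) :
    LinearMap.det (ρ g) = 1 := by
  apply hG.pow_injective
  simp only [← map_pow, pow_card_eq_one', map_one, one_pow]

theorem sum_character_pos_of_odd_card [Fintype G] (ρ : Representation k G V)
    (hG : Odd (Nat.card G)) (hV : finrank k V = 3) : 0 < ∑ g, ρ.character g := by
  have : FiniteDimensional k V := .of_finrank_pos (by lia)
  have sum_sq : ∑ g, ρ.character (g ^ 2) = ∑ g, ρ.character g :=
    Equiv.sum_comp (powCoprime hG.coprime_two_right) ρ.character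
  have sum_inv : ∑ g, ρ.character g⁻¹ = ∑ g, ρ.character g :=
    Equiv.sum_comp (Equiv.inv G) ρ.character
  have sum_eq : 3 * ∑ g, ρ.character g = ∑ g, ρ.character g ^ 2 := by
    simp_rw [character_sq_of_finrank_eq_three ρ hV (det_eq_one_of_odd_card ρ hG _),
      Finset.sum_sub_distrib, ← Finset.mul_sum, sum_inv] at sum_sq
    linear_combination -sum_sq
  have sum_pos : 0 < ∑ g, ρ.character g ^ 2 :=
    Finset.sum_pos' (fun g _ => sq_nonneg _) ⟨1, Finset.mem_univ 1, by simp [hV]⟩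
  linarith

theorem invariants_ne_bot_of_odd_card [Finite G] (ρ : Representation k G V)
    (hG : Odd (Nat.card G)) (hV : finrank k V = 3) : ρ.invariants ≠ ⊥ := by
  have : FiniteDimensional k V := .of_finrank_pos (by lia)
  have := Fintype.ofFinite G
  have : Invertible (Nat.card G : k) := invertibleOfNonzero (by exact_mod_cast hG.pos.ne')
  intro hbot
  have hsum := ρ.card_inv_mul_sum_char_eq_finrank
  rw [hbot, finrank_bot, Nat.cast_zero] at hsum
  exact (mul_pos (inv_pos.2 (by exact_mod_cast hG.pos))
    (sum_character_pos_of_odd_card ρ hG hV)).ne' hsum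

end OddOrder

section Quotient

theorem pow_apply_eq_add_nsmul {R M : Type*} [Ring R] [AddCommGroup M] [Module R M] {f : End R M}
    {x : M} (hx : f (f x - x) = f x - x) (n : ℕ) : (f ^ n) x = x + n • (f x - x) := by
  induction n with
  | zero => simp
  | succ n ih =>
    rw [pow_succ', End.mul_apply, ih, map_add, map_nsmul, hx, succ_nsmul]
    abel

variable {k G V : Type*} [CommRing k] [Group G] [AddCommGroup V] [Module k V]
  {ρ : Representation k G V} {W : Submodule k V}

theorem le_comap_of_le_invariants (hW : W ≤ ρ.invariants) (g : G) : W ≤ W.comap (ρ g) :=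
  fun x hx => by rwa [Submodule.mem_comap, hW hx g]

theorem quotient_injective_of_le_invariants [Finite G] [IsAddTorsionFree V] (hρ : Injective ρ)
    (hW : W ≤ ρ.invariants) : Injective (ρ.quotient W (le_comap_of_le_invariants hW)) := by
  rw [injective_iff_map_eq_one] at hρ ⊢
  refine fun g hg => hρ g (LinearMap.ext fun x => ?_)
  have hmem : ρ g x - x ∈ W :=
    (Submodule.Quotient.eq W).1 (LinearMap.congr_fun hg (Submodule.Quotient.mk x))
  have hpow := pow_apply_eq_add_nsmul (hW hmem g) (Nat.card G)
  rw [← map_pow, pow_card_eq_one', map_one, End.one_apply, left_eq_add,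
    smul_eq_zero_iff_right Nat.card_pos.ne', sub_eq_zero] at hpow
  exact hpow

end Quotient

section Unitary

variable {𝕜 V E : Type*} [RCLike 𝕜] [AddCommGroup V] [Module 𝕜 V] [FiniteDimensional 𝕜 V]
  [NormedAddCommGroup E] [InnerProductSpace 𝕜 E] [FiniteDimensional 𝕜 E]

theorem exists_linearEquiv_norm_eq_of_injective {F : Type*} [NormedAddCommGroup F]
    [InnerProductSpace 𝕜 F] {T : V →ₗ[𝕜] F} (hT : Injective T) (h : finrank 𝕜 V = finrank 𝕜 E) :
    ∃ e : V ≃ₗ[𝕜] E, ∀ x, ‖e x‖ = ‖T x‖ := by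
  let toRange : V ≃ₗ[𝕜] T.range := LinearEquiv.ofInjective T hT
  let i : T.range ≃ₗᵢ[𝕜] E := (stdOrthonormalBasis 𝕜 T.range).equiv
    (stdOrthonormalBasis 𝕜 E) (finCongr (toRange.finrank_eq.symm.trans h))
  exact ⟨toRange.trans i.toLinearEquiv, fun x => i.norm_map (toRange x)⟩

variable {G : Type*} [Group G] [Finite G]

theorem exists_linearEquiv_norm_map_eq (ρ : Representation 𝕜 G V)
    (h : finrank 𝕜 V = finrank 𝕜 E) : ∃ e : V ≃ₗ[𝕜] E, ∀ g x, ‖e (ρ g x)‖ = ‖e x‖ := by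
  have := Fintype.ofFinite G
  let c : V ≃ₗ[𝕜] E := LinearEquiv.ofFinrankEq V E h
  obtain ⟨orbit, orbit_apply⟩ :
      ∃ T : V →ₗ[𝕜] PiLp 2 fun _ : G => E, ∀ x g, T x g = c (ρ g x) :=
    ⟨(WithLp.linearEquiv 2 𝕜 (G → E)).symm.toLinearMap ∘ₗ
      LinearMap.pi fun g => c.toLinearMap ∘ₗ ρ g, fun _ _ => rfl⟩
  have norm_orbit (g : G) (x : V) : ‖orbit (ρ g x)‖ = ‖orbit x‖ := by
    simp_rw [PiLp.norm_eq_of_L2, orbit_apply, ← End.mul_apply, ← map_mul]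
    exact congrArg Real.sqrt (Equiv.sum_comp (Equiv.mulRight g) fun a => ‖c (ρ a x)‖ ^ 2)
  have orbit_injective : Injective orbit := fun x y hxy => by
    have eval_one : orbit x 1 = orbit y 1 := by rw [hxy]
    rwa [orbit_apply, orbit_apply, map_one, End.one_apply, End.one_apply, c.injective.eq_iff]
      at eval_one
  obtain ⟨e, he⟩ := exists_linearEquiv_norm_eq_of_injective orbit_injective h
  exact ⟨e, fun g x => by rw [he, he, norm_orbit]⟩

theorem exists_linearIsometryEquiv_hom (ρ : Representation 𝕜 G V)
    (h : finrank 𝕜 V = finrank 𝕜 E) : ∃ (e : V ≃ₗ[𝕜] E) (φ : G →* E ≃ₗᵢ[𝕜] E),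
      ∀ g, ((φ g).toLinearEquiv : E →ₗ[𝕜] E) = e.conj (ρ g) := by
  obtain ⟨e, he⟩ := exists_linearEquiv_norm_map_eq (E := E) ρ h
  let σ : G →* E ≃ₗ[𝕜] E :=
    (LinearMap.GeneralLinearGroup.generalLinearEquiv 𝕜 E).toMonoidHom.comp
      ((e.conjRingEquiv : End 𝕜 V →* End 𝕜 E).comp ρ).toHomUnits
  have norm_σ (g : G) (x : E) : ‖σ g x‖ = ‖x‖ :=
    calc ‖e (ρ g (e.symm x))‖ = ‖e (e.symm x)‖ := he g _
      _ = ‖x‖ := by rw [e.apply_symm_apply]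
  let φ : G →* E ≃ₗᵢ[𝕜] E :=
    { toFun := fun g => ⟨σ g, norm_σ g⟩
      map_one' := by ext; simp
      map_mul' := fun g h => by ext; simp }
  exact ⟨e, φ, fun g => rfl⟩

end Unitary

section Plane

theorem exists_rotation_eq_of_det_eq_one {f : ℂ ≃ₗᵢ[ℝ] ℂ}
    (hf : LinearMap.det (f.toLinearEquiv : ℂ →ₗ[ℝ] ℂ) = 1) : ∃ a, rotation a = f := by
  obtain ⟨a, rfl | rfl⟩ := linear_isometry_complex f
  · exact ⟨a, rfl⟩
  · have hdet : LinearMap.det ((Complex.conjLIE.trans (rotation a)).toLinearEquiv : ℂ →ₗ[ℝ] ℂ)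
        = -1 := by
      rw [LinearIsometryEquiv.toLinearEquiv_trans, LinearEquiv.coe_trans, LinearMap.det_comp,
        det_rotation, Complex.det_conjLIE, one_mul]
    exact absurd (hdet.symm.trans hf) (by norm_num)

theorem isCyclic_of_injective_of_finrank_eq_two {G V : Type*} [Group G] [Finite G]
    [AddCommGroup V] [Module ℝ V] {ρ : Representation ℝ G V} (hρ : Injective ρ)
    (hV : finrank ℝ V = 2) (hdet : ∀ g, LinearMap.det (ρ g) = 1) : IsCyclic G := by
  have : FiniteDimensional ℝ V := .of_finrank_pos (by lia)
  obtain ⟨e, φ, hφ⟩ :=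
    exists_linearIsometryEquiv_hom ρ (hV.trans Complex.finrank_real_complex.symm)
  have φ_mem_range (g : G) : φ g ∈ rotation.range :=
    exists_rotation_eq_of_det_eq_one (by
      rw [hφ, LinearEquiv.conj_apply, LinearMap.comp_assoc, LinearMap.det_conj, hdet])
  have φ_injective : Injective φ := fun g h hgh =>
    hρ (e.conj.injective (by rw [← hφ, ← hφ, hgh]))
  let angle : G →* Circle := (MonoidHom.ofInjective rotation_injective).symm.toMonoidHom.comp
    (φ.codRestrict rotation.range φ_mem_range)
  have angle_injective : Injective angle :=
    (MonoidHom.ofInjective rotation_injective).symm.injective.comp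
      ((MonoidHom.injective_codRestrict φ _ φ_mem_range).2 φ_injective)
  exact isCyclic_of_injective_ringHom (Circle.coeHom.comp angle)
    (Circle.coe_injective.comp angle_injective)

end Plane

theorem isCyclic_of_odd_card_of_finrank_eq_three {G V : Type*} [Group G] [Finite G]
    [AddCommGroup V] [Module ℝ V] {ρ : Representation ℝ G V} (hρ : Injective ρ)
    (hG : Odd (Nat.card G)) (hV : finrank ℝ V = 3) : IsCyclic G := by
  have : FiniteDimensional ℝ V := .of_finrank_pos (by lia)
  obtain ⟨v, hv, hv0⟩ := Submodule.exists_mem_ne_zero_of_ne_bot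
    (invariants_ne_bot_of_odd_card ρ hG hV)
  have hL : ℝ ∙ v ≤ ρ.invariants := by simpa using hv
  have hplane : finrank ℝ (V ⧸ ℝ ∙ v) = 2 := by
    have := (ℝ ∙ v).finrank_quotient_add_finrank
    rw [finrank_span_singleton hv0] at this
    lia
  have : IsAddTorsionFree V := .of_isTorsionFree ℝ V
  exact isCyclic_of_injective_of_finrank_eq_two (quotient_injective_of_le_invariants hρ hL) hplane
    (det_eq_one_of_odd_card _ hG)

/-- Every finite subgroup of odd order of `PGL(3, ℝ)` is cyclic. -/
theorem odd_subgroup_PGL3_isCyclic (H : Subgroup (PGL 3 ℝ)) [Finite H]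
    (hodd : Odd (Nat.card H)) : IsCyclic H := by
  let e : PGL 3 ℝ ≃* SpecialLinearGroup (Fin 3) ℝ :=
    (MulEquiv.ofBijective toPGL (bijective_toPGL_of_bijective_pow
      (pow_bijective_units_real (by decide)))).symm
  let ρ : Representation ℝ H (Fin 3 → ℝ) :=
    (LinearEquiv.automorphismGroup.toLinearMapMonoidHom.comp SpecialLinearGroup.toLin').comp
      (e.toMonoidHom.comp H.subtype)
  have hρ : Injective ρ := LinearEquiv.toLinearMap_injective.comp
    (SpecialLinearGroup.toLin'_injective.comp (e.injective.comp H.subtype_injective))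
  exact isCyclic_of_odd_card_of_finrank_eq_three hρ hodd (by simp)
end

section
/- Every finite subgroup of odd order of PGL(4, ℝ) is isomorphic to a direct product of at most two cyclic groups. -/
open Matrix

/-!
A finite group of odd order in `PGL(n, ℝ)` lifts to `SL(n, ℝ)` by the Schur–Zassenhaus theorem: its
elements are squares, so they come from `SL(n, ℝ)`, and the kernel of `SL(n, ℝ) → PGL(n, ℝ)` is a
`2`-group.

For a real representation `V` of a group `G` of odd order, the character `χ` takes equal values at
`g` and `g⁻¹`, and `g ≠ g⁻¹` unless `g = 1`. Hence `|G| • dim V^G = ∑ χ(g) ≡ χ(1) = dim V` modulo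
twice an algebraic integer, and `dim V^G` and `dim V` have the same parity. If `dim V = 4`, the
space of symmetric matrices has even dimension `10` and contains the invariant `1`, so it contains a
non-scalar invariant, whose eigenspaces are proper subrepresentations. The same parity principle
turns a proper subrepresentation into a plane, so that `V` is a sum of two planes, on each of which
`G` acts through `SO(2) ⊆ ℂˣ`. Thus `G` embeds into `ℂˣ × ℂˣ`, whose finite subgroups are generated
by two elements.
-/

theorem exists_addEquiv_pi_zmod_of_span_eq_top {ι A : Type*} [Finite ι] [AddCommGroup A]
    [Finite A] {v : ι → A} (hv : Submodule.span ℤ (Set.range v) = ⊤) :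
    ∃ n : ι → ℕ, Nonempty (A ≃+ Π i, ZMod (n i)) := by
  have := Fintype.ofFinite ι
  let F := Fintype.linearCombination ℤ v
  have hF : Function.Surjective F := by
    rw [← LinearMap.range_eq_top, Fintype.range_linearCombination, hv]
  let e := F.quotKerEquivOfSurjective hF
  have : Finite ((ι → ℤ) ⧸ LinearMap.ker F) := Finite.of_equiv _ e.symm.toEquiv
  have full_rank := (Submodule.finiteQuotient_iff (LinearMap.ker F)).1 this
  exact ⟨_, ⟨e.symm.toAddEquiv.trans <|
    Submodule.quotientEquivPiZMod (LinearMap.ker F) (Pi.basisFun ℤ ι) full_rank⟩⟩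

theorem exists_mulEquiv_zmod_prod_zmod_of_isCyclic {G N : Type*} [CommGroup G] [Finite G]
    [Group N] (f : G →* N) [IsCyclic f.ker] [IsCyclic f.range] :
    ∃ m k : ℕ, Nonempty (G ≃* Multiplicative (ZMod m) × Multiplicative (ZMod k)) := by
  obtain ⟨⟨b, hb⟩, hker⟩ := IsCyclic.exists_generator (α := f.ker)
  obtain ⟨⟨_, a, rfl⟩, hrange⟩ := IsCyclic.exists_generator (α := f.range)
  have span_eq_top :
      Submodule.span ℤ (Set.range ![Additive.ofMul a, Additive.ofMul b]) = ⊤ := by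
    rw [Matrix.range_cons_cons_empty, eq_top_iff]
    rintro g -
    obtain ⟨k, hk⟩ := hrange ⟨f g.toMul, g.toMul, rfl⟩
    have hk : f a ^ k = f g.toMul := congrArg Subtype.val hk
    obtain ⟨l, hl⟩ := hker ⟨(a ^ k)⁻¹ * g.toMul, by simp [MonoidHom.mem_ker, hk]⟩
    have hl : b ^ l = (a ^ k)⁻¹ * g.toMul := congrArg Subtype.val hl
    exact Submodule.mem_span_pair.2 ⟨k, l, congrArg Additive.ofMul (eq_inv_mul_iff_mul_eq.1 hl)⟩
  obtain ⟨n, ⟨e⟩⟩ := exists_addEquiv_pi_zmod_of_span_eq_top span_eq_top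
  let e' : Additive G ≃+ ZMod (n 0) × ZMod (n 1) :=
    e.trans (LinearEquiv.piFinTwo ℤ fun i => ZMod (n i)).toAddEquiv
  exact ⟨n 0, n 1, ⟨(AddEquiv.toMultiplicativeRight e').trans (MulEquiv.prodMultiplicative _ _)⟩⟩

theorem exists_mulEquiv_zmod_prod_zmod_of_ker_inf_ker_eq_bot {G R : Type*} [Group G] [Finite G]
    [CommRing R] [IsDomain R] {φ ψ : G →* Rˣ} (h : φ.ker ⊓ ψ.ker = ⊥) :
    ∃ m k : ℕ, Nonempty (G ≃* Multiplicative (ZMod m) × Multiplicative (ZMod k)) := by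
  have inj : Function.Injective (φ.prod ψ) := by
    rw [← MonoidHom.ker_eq_bot_iff, MonoidHom.ker_prod, h]
  let _ : CommGroup G := { mul_comm := fun x y => inj <| by rw [map_mul, map_mul, mul_comm] }
  have ker_disjoint : ψ.ker.subgroupOf φ.ker = ⊥ :=
    Subgroup.subgroupOf_eq_bot.2 (disjoint_iff.2 h).symm
  have : IsCyclic φ.ker := by
    refine isCyclic_of_injective_ringHom ((Units.coeHom R).comp (ψ.comp φ.ker.subtype)) <|
      Units.val_injective.comp <| (MonoidHom.ker_eq_bot_iff _).1 ?_
    rw [← MonoidHom.comap_ker]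
    exact ker_disjoint
  have : Finite φ.range := Finite.of_surjective _ φ.rangeRestrict_surjective
  exact exists_mulEquiv_zmod_prod_zmod_of_isCyclic φ

theorem exists_comp_eq_of_coprime {E Q G : Type*} [Group E] [Group Q] [Group G] {π : E →* Q}
    {f : G →* Q} (hf : f.range ≤ π.range)
    (hcard : (Nat.card π.ker).Coprime (Nat.card G)) : ∃ s : G →* E, π.comp s = f := by
  -- A complement of the kernel of the pullback `p` of `π` along `f` is the graph of a lift of `f`.
  let P := (π.comp (MonoidHom.fst E G)).eqLocus (f.comp (MonoidHom.snd E G))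
  let p : P →* G := (MonoidHom.snd E G).comp P.subtype
  have hp : Function.Surjective p := fun g =>
    let ⟨x, hx⟩ := hf ⟨g, rfl⟩
    ⟨⟨(x, g), hx⟩, rfl⟩
  have card_ker : Nat.card p.ker = Nat.card π.ker := Nat.card_congr
    { toFun x := ⟨x.1.1.1, x.1.2.trans <| (congrArg f x.2).trans (map_one f)⟩
      invFun x := ⟨⟨(x.1, 1), x.2.trans (map_one f).symm⟩, rfl⟩
      left_inv x := Subtype.ext <| Subtype.ext <| Prod.ext rfl x.2.symm
      right_inv x := rfl }
  obtain ⟨C, hC⟩ := Subgroup.exists_left_complement'_of_coprime (N := p.ker) <| by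
    rwa [card_ker, Subgroup.index_ker, MonoidHom.range_eq_top.2 hp, Subgroup.card_top]
  let s : G →* P := C.subtype.comp <|
    (QuotientGroup.quotientKerEquivOfSurjective p hp).symm.trans hC.QuotientMulEquiv
  have hs (g : G) : p (s g) = g := by
    have h : ((s g : P) : P ⧸ p.ker) = (QuotientGroup.quotientKerEquivOfSurjective p hp).symm g :=
      hC.QuotientMulEquiv.symm_apply_apply _
    exact (MulEquiv.eq_symm_apply _).1 h
  refine ⟨(MonoidHom.fst E G).comp (P.subtype.comp s), MonoidHom.ext fun g => ?_⟩
  exact (s g).2.trans (congrArg f (hs g))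

section ProjectiveGroups

open Matrix.SpecialLinearGroup ProjGenLinGroup

variable {n : Type*} [Fintype n] [DecidableEq n]

theorem coprime_card_center_specialLinearGroup {R : Type*} [CommRing R] [LinearOrder R]
    [IsStrictOrderedRing R] {m : ℕ} (hm : Odd m) :
    (Nat.card (Subgroup.center (SpecialLinearGroup n R))).Coprime m := by
  have : NeZero (max (Fintype.card n) 1) := ⟨by simp⟩
  have : Finite (Subgroup.center (SpecialLinearGroup n R)) :=
    Finite.of_equiv _ center_equiv_rootsOfUnity.symm.toEquiv
  have isPGroup : IsPGroup 2 (Subgroup.center (SpecialLinearGroup n R)) := fun A => ⟨1, by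
    obtain ⟨r, hr, hA⟩ := mem_center_iff.1 A.2
    rcases isEmpty_or_nonempty n with _ | _
    · exact Subsingleton.elim _ _
    · have r_sq : r ^ 2 = 1 := sq_eq_one_iff.2 <|
        ((pow_eq_one_iff_of_ne_zero Fintype.card_ne_zero).1 hr).imp_right And.left
      refine Subtype.ext <| Subtype.ext ?_
      rw [pow_one, Subgroup.coe_pow, coe_pow, ← hA, ← map_pow, r_sq, map_one]
      rfl⟩
  obtain ⟨k, hk⟩ := isPGroup.exists_card_eq
  rw [hk]
  exact hm.coprime_two_left.pow_left k

theorem sq_mem_range_toPGL (x : ProjGenLinGroup n ℝ) :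
    x ^ 2 ∈ (toPGL : SpecialLinearGroup n ℝ →* ProjGenLinGroup n ℝ).range := by
  obtain ⟨B, rfl⟩ := mk_surjective x
  have det_pos : 0 < |B.val.det| := abs_pos.2 B.det_ne_zero
  obtain ⟨r, r_pos, hr⟩ : ∃ r : ℝ, 0 < r ∧ r ^ Fintype.card n = |B.val.det| := by
    rcases isEmpty_or_nonempty n with _ | _
    · exact ⟨1, one_pos, by simp⟩
    · exact ⟨_, Real.rpow_pos_of_pos det_pos _,
        Real.rpow_inv_natCast_pow det_pos.le Fintype.card_ne_zero⟩
  let u := (Units.mk0 r r_pos.ne')⁻¹ ^ 2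
  have hdet : (B ^ 2 * GeneralLinearGroup.scalar n u).val.det = 1 := by
    have : |B.val.det| ^ 2 * ((r ^ Fintype.card n) ^ 2)⁻¹ = 1 := by
      rw [hr, mul_inv_cancel₀ (pow_ne_zero 2 det_pos.ne')]
    simpa [u] using this
  let A : SpecialLinearGroup n ℝ := ⟨_, hdet⟩
  have hA : A.toGL = B ^ 2 * GeneralLinearGroup.scalar n u := Units.ext rfl
  refine ⟨A, ?_⟩
  rw [MonoidHom.comp_apply, hA, map_mul, mk_scalar, mul_one, map_pow]

theorem exists_toPGL_comp_eq {G : Type*} [Group G] (hodd : Odd (Nat.card G))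
    (f : G →* ProjGenLinGroup n ℝ) : ∃ s : G →* SpecialLinearGroup n ℝ, toPGL.comp s = f := by
  refine exists_comp_eq_of_coprime ?_ ?_
  · rintro _ ⟨g, rfl⟩
    obtain ⟨h, rfl⟩ := (hodd.coprime_two_right.pow_left_bijective).2 g
    rw [map_pow]
    exact sq_mem_range_toPGL (f h)
  · rw [toPGL_ker]
    exact coprime_card_center_specialLinearGroup hodd

end ProjectiveGroups

open Module Representation

theorem two_dvd_sum_sub_of_map_inv_eq {G R : Type*} [Group G] [Fintype G] [CommRing R]
    (hodd : Odd (Nat.card G)) {f : G → R} (hf : ∀ g, f g⁻¹ = f g) :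
    2 ∣ ∑ g, f g - f 1 := by
  classical
  have inv_ne_self {g : G} (hg : g ≠ 1) : g⁻¹ ≠ g := fun h =>
    hg <| (pow_eq_one_iff_of_coprime hodd.coprime_two_right).1
      ⟨pow_card_eq_one', by rw [pow_two, mul_eq_one_iff_inv_eq, h]⟩
  rw [← Finset.add_sum_erase _ f (Finset.mem_univ 1), add_sub_cancel_left,
    ← Ideal.mem_span_singleton, ← Ideal.Quotient.eq_zero_iff_mem, map_sum]
  refine Finset.sum_involution (fun g _ => g⁻¹) (fun g _ => ?_) (fun g hg _ => ?_) ?_ ?_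
  · rw [← map_add, hf, ← two_mul, Ideal.Quotient.eq_zero_iff_mem, Ideal.mem_span_singleton]
    exact dvd_mul_right 2 (f g)
  · exact inv_ne_self (Finset.ne_of_mem_erase hg)
  · simp
  · simp

theorem isIntegral_trace_of_pow_eq_one {K V : Type*} [Field K] [AddCommGroup V]
    [Module K V] [FiniteDimensional K V] {f : Module.End K V} {m : ℕ} (hm : m ≠ 0)
    (hf : f ^ m = 1) : IsIntegral ℤ (LinearMap.trace K V f) := by
  let L := AlgebraicClosure K
  let F := Module.End.baseChangeHom K L V f
  have hF : F ^ m = 1 := by rw [← map_pow, hf, map_one]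
  rw [← isIntegral_algebraMap_iff (FaithfulSMul.algebraMap_injective K L),
    ← LinearMap.trace_baseChange, Module.End.trace_eq_sum_roots_charpoly_of_splits
      (IsAlgClosed.splits _)]
  refine IsIntegral.multiset_sum fun μ hμ => .of_pow (Nat.pos_of_ne_zero hm) ?_
  obtain ⟨v, hv⟩ := ((Module.End.hasEigenvalue_iff_isRoot_charpoly _ _).2
    (Polynomial.isRoot_of_mem_roots hμ)).exists_hasEigenvector
  have h : μ ^ m • v = (1 : L) • v := by
    rw [← hv.pow_apply, one_smul]
    exact LinearMap.congr_fun hF v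
  rw [smul_left_injective L hv.2 h]
  exact isIntegral_one

theorem isIntegral_character {G K V : Type*} [Group G] [Finite G] [Field K]
    [AddCommGroup V] [Module K V] [FiniteDimensional K V] (ρ : Representation K G V) (g : G) :
    IsIntegral ℤ (ρ.character g) :=
  isIntegral_trace_of_pow_eq_one Nat.card_pos.ne' (by rw [← map_pow, pow_card_eq_one', map_one])

theorem even_of_two_dvd_integralClosure {K : Type*} [Field K] [CharZero K] {n : ℤ}
    (h : (2 : integralClosure ℤ K) ∣ n) : Even n := by
  obtain ⟨x, hx⟩ := h
  replace hx : (n : K) = 2 * x := congrArg Subtype.val hx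
  have half_eq : algebraMap ℚ K (n / 2) = x := by simp [hx]
  obtain ⟨y, hy⟩ := IsIntegrallyClosed.isIntegral_iff.1 <|
    (isIntegral_algebraMap_iff (algebraMap ℚ K).injective).1 (half_eq ▸ x.2)
  refine even_iff_two_dvd.2 ⟨y, ?_⟩
  rw [eq_intCast, eq_div_iff two_ne_zero] at hy
  exact_mod_cast hy.symm.trans (mul_comm _ _)

section UnitaryRepresentations

variable {𝕜 G V : Type*} [RCLike 𝕜] [Group G] [Finite G] [AddCommGroup V] [Module 𝕜 V]
  [FiniteDimensional 𝕜 V] (ρ : Representation 𝕜 G V)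

theorem exists_basis_toMatrix_mem_unitaryGroup :
    ∃ b : Basis (Fin (finrank 𝕜 V)) 𝕜 V,
      ∀ g, LinearMap.toMatrix b b (ρ g) ∈ unitaryGroup (Fin (finrank 𝕜 V)) 𝕜 := by
  have := Fintype.ofFinite G
  let coords := (finBasis 𝕜 V).equivFun.trans (WithLp.linearEquiv 2 𝕜 _).symm
  let averagedInner : InnerProductSpace.Core 𝕜 V :=
    { inner v w := ∑ g : G, inner 𝕜 (coords (ρ g v)) (coords (ρ g w))
      conj_inner_symm v w := by simp [map_sum]
      re_inner_nonneg v := by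
        rw [map_sum]
        exact Finset.sum_nonneg fun _ _ => inner_self_nonneg
      add_left u v w := by simp [inner_add_left, Finset.sum_add_distrib]
      smul_left v w r := by simp [inner_smul_left, Finset.mul_sum]
      definite v hv := by
        have hre : ∑ g : G, RCLike.re (inner 𝕜 (coords (ρ g v)) (coords (ρ g v))) = 0 := by
          simpa using congrArg RCLike.re hv
        have norm_sq_eq_zero := (Finset.sum_eq_zero_iff_of_nonneg fun _ _ => inner_self_nonneg).1
          hre 1 (Finset.mem_univ 1)
        rwa [inner_self_eq_norm_sq, sq_eq_zero_iff, norm_eq_zero, map_one, End.one_apply,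
          coords.map_eq_zero_iff] at norm_sq_eq_zero }
  let := averagedInner.toNormedAddCommGroup
  let := InnerProductSpace.ofCore averagedInner.toCore
  let isometry (g : G) : V ≃ₗᵢ[𝕜] V :=
    (LinearEquiv.ofBijective (ρ g) (ρ.apply_bijective g)).isometryOfInner fun v w =>
      Fintype.sum_equiv (Equiv.mulRight g) _ _ fun h => by simp
  let c := stdOrthonormalBasis 𝕜 V
  exact ⟨c.toBasis, fun g => (isometry g).toMatrix_mem_unitaryGroup c c⟩

theorem character_inv (g : G) :
    ρ.character g⁻¹ = star (ρ.character g) := by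
  obtain ⟨b, hb⟩ := exists_basis_toMatrix_mem_unitaryGroup ρ
  have h : LinearMap.toMatrix b b (ρ g⁻¹) = star (LinearMap.toMatrix b b (ρ g)) := by
    rw [← mul_one (star _), ← LinearMap.toMatrix_one b, ← map_one ρ, ← mul_inv_cancel g, map_mul,
      LinearMap.toMatrix_mul, ← mul_assoc, mem_unitaryGroup_iff'.1 (hb g), one_mul]
  simp_rw [Representation.character, LinearMap.trace_eq_matrix_trace 𝕜 b]
  rw [h, star_eq_conjTranspose, trace_conjTranspose]

end UnitaryRepresentations

section SymmetricMatrices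

variable (n R : Type*) [CommRing R]

/-- The module of symmetric `n × n` matrices, a summand of the tensor square of `Rⁿ`. -/
def symmetricMatrices : Submodule R (Matrix n n R) where
  carrier := {X | X.IsSymm}
  zero_mem' := isSymm_zero
  add_mem' := .add
  smul_mem' c _ hX := hX.smul c

variable {n R}

/-- A symmetric matrix is a function of the unordered pair of its row and column indices. -/
def symmetricMatricesEquiv : symmetricMatrices n R ≃ₗ[R] (Sym2 n → R) where
  toFun X := Sym2.lift ⟨X.1, fun i j => X.2.apply j i⟩
  map_add' _ _ := funext <| Sym2.ind fun _ _ => rfl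
  map_smul' _ _ := funext <| Sym2.ind fun _ _ => rfl
  invFun f := ⟨.of fun i j => f s(i, j), IsSymm.ext fun _ _ => congrArg f Sym2.eq_swap⟩
  left_inv _ := rfl
  right_inv _ := funext <| Sym2.ind fun _ _ => rfl

theorem finrank_symmetricMatrices [StrongRankCondition R] [Fintype n] :
    finrank R (symmetricMatrices n R) = (Fintype.card n + 1).choose 2 := by
  classical
  rw [symmetricMatricesEquiv.finrank_eq, finrank_fintype_fun_eq_card, Sym2.card]

/-- The action of `G` on symmetric matrices by congruence, `g • X = A(g) X A(g)ᵀ`; when `A` is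
orthogonal, its invariants are the symmetric matrices commuting with every `A(g)`. -/
def congruenceRepresentation {G : Type*} [Monoid G] [Fintype n] [DecidableEq n]
    (A : G →* Matrix n n R) : Representation R G (symmetricMatrices n R) where
  toFun g :=
    { toFun X := ⟨A g * X * (A g)ᵀ, by
        have hX : (X : Matrix n n R)ᵀ = X := X.2.eq
        change (A g * X * (A g)ᵀ).IsSymm
        simp [IsSymm, mul_assoc, hX]⟩
      map_add' X Y := by ext1; simp [mul_add, add_mul]
      map_smul' c X := by ext1; simp }
  map_one' := by ext1 X; ext1; simp
  map_mul' g h := by ext1 X; ext1; simp [mul_assoc]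

end SymmetricMatrices

theorem exists_hasEigenvalue_toLin {𝕜 ι V : Type*} [RCLike 𝕜] [Fintype ι] [DecidableEq ι]
    [Nonempty ι] [AddCommGroup V] [Module 𝕜 V] (b : Basis ι 𝕜 V)
    {X : Matrix ι ι 𝕜} (hX : X.IsHermitian) : ∃ μ, Module.End.HasEigenvalue (toLin b b X) μ := by
  have := b.finiteDimensional_of_finite
  obtain ⟨μ, hμ⟩ := hX.splits_charpoly.exists_eval_eq_zero <| by
    simp [charpoly_degree_eq_dim]
  exact ⟨μ, (Module.End.hasEigenvalue_iff_isRoot_charpoly _ _).2 <| by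
    rwa [charpoly_toLin X b]⟩

theorem exists_subrepresentation_ne_bot_ne_top_of_commute {G K V : Type*} [Monoid G]
    [CommRing K] [AddCommGroup V] [Module K V] {ρ : Representation K G V} {T : End K V} {μ : K}
    (hμ : T.HasEigenvalue μ) (hcomm : ∀ g, Commute T (ρ g)) (hT : T ≠ μ • 1) :
    ∃ W : Subrepresentation ρ, W ≠ ⊥ ∧ W ≠ ⊤ := by
  refine ⟨⟨T.eigenspace μ, fun g v hv => ?_⟩, fun h => hμ (congrArg (·.toSubmodule) h),
    fun h => hT <| LinearMap.ext fun v => ?_⟩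
  · exact Module.End.mapsTo_genEigenspace_of_comm (hcomm g) μ 1 hv
  · have : v ∈ T.eigenspace μ := by
      rw [show T.eigenspace μ = ⊤ from congrArg (·.toSubmodule) h]
      exact Submodule.mem_top
    simpa using Module.End.mem_eigenspace_iff.1 this

theorem ker_toRepresentation_inf_ker_toRepresentation {R G M : Type*} [Ring R] [Group G]
    [AddCommGroup M] [Module R M] {ρ : Representation R G M} {W W' : Subrepresentation ρ}
    (h : Codisjoint W.toSubmodule W'.toSubmodule) :
    W.toRepresentation.ker ⊓ W'.toRepresentation.ker = ρ.ker := by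
  ext g
  refine ⟨fun ⟨hg, hg'⟩ => ?_, fun hg => ⟨?_, ?_⟩⟩
  · exact LinearMap.ext_on_codisjoint h
      (fun w hw => congrArg Subtype.val (LinearMap.congr_fun hg ⟨w, hw⟩))
      (fun w hw => congrArg Subtype.val (LinearMap.congr_fun hg' ⟨w, hw⟩))
  all_goals exact LinearMap.ext fun w => Subtype.ext (LinearMap.congr_fun hg w)

/-- The embedding of `SO(2)` into the multiplicative monoid of `ℂ`, reading a rotation matrix
`!![a, -b; b, a]` as `a + b * I`. -/
def specialOrthogonalGroupToComplex : specialOrthogonalGroup (Fin 2) ℝ →* ℂ where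
  toFun A := ⟨A.1 0 0, A.1 1 0⟩
  map_one' := by simp [Complex.ext_iff]
  map_mul' A B := by
    obtain ⟨hd, ho, -⟩ := mem_specialOrthogonalGroup_fin_two_iff.1 A.2
    refine Complex.ext ?_ ?_
    · simp [mul_apply, Fin.sum_univ_two, ho, sub_eq_add_neg]
    · simp [mul_apply, Fin.sum_univ_two, hd, add_comm]

theorem specialOrthogonalGroupToComplex_injective :
    Function.Injective specialOrthogonalGroupToComplex := fun A B hAB => by
  have h₀ : A.1 0 0 = B.1 0 0 := congrArg Complex.re hAB
  have h₁ : A.1 1 0 = B.1 1 0 := congrArg Complex.im hAB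
  obtain ⟨hAd, hAo, -⟩ := mem_specialOrthogonalGroup_fin_two_iff.1 A.2
  obtain ⟨hBd, hBo, -⟩ := mem_specialOrthogonalGroup_fin_two_iff.1 B.2
  ext i j
  fin_cases i <;> fin_cases j <;> simp [h₀, h₁, hAo, hBo, ← hAd, ← hBd]

theorem exists_submodule_le_finrank_eq {K V : Type*} [DivisionRing K] [AddCommGroup V] [Module K V]
    {U : Submodule K V} {n : ℕ} (hn : n ≤ finrank K U) :
    ∃ W ≤ U, finrank K W = n := by
  obtain ⟨v, hv⟩ := exists_linearIndependent_of_le_finrank hn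
  refine ⟨(Submodule.span K (Set.range v)).map U.subtype, Submodule.map_subtype_le _ _, ?_⟩
  rw [Submodule.finrank_map_subtype_eq, finrank_span_eq_card hv, Fintype.card_fin]

section OddOrder

variable {G V : Type*} [Group G] [Finite G] [AddCommGroup V] [Module ℝ V] [FiniteDimensional ℝ V]

theorem even_finrank_invariants_iff (hodd : Odd (Nat.card G)) (ρ : Representation ℝ G V) :
    Even (finrank ℝ ρ.invariants) ↔ Even (finrank ℝ V) := by
  have := Fintype.ofFinite G
  have card_ne_zero : (Nat.card G : ℝ) ≠ 0 := Nat.cast_ne_zero.2 Nat.card_pos.ne'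
  let := invertibleOfNonzero card_ne_zero
  let χ (g : G) : integralClosure ℤ ℝ := ⟨ρ.character g, isIntegral_character ρ g⟩
  have hχ (g : G) : χ g⁻¹ = χ g := Subtype.ext <| by simp [χ, character_inv]
  have χ_one : χ 1 = (finrank ℝ V : ℤ) := Subtype.ext <| by simp [χ]
  have sum_χ : ∑ g, χ g = (Nat.card G * finrank ℝ ρ.invariants : ℤ) := Subtype.ext <| by
    have := (inv_mul_eq_iff_eq_mul₀ card_ne_zero).1 ρ.card_inv_mul_sum_char_eq_finrank
    simpa [χ]
  have h := two_dvd_sum_sub_of_map_inv_eq hodd hχ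
  rw [χ_one, sum_χ, ← Int.cast_sub] at h
  have even_sub := even_of_two_dvd_integralClosure h
  have : Odd (Nat.card G : ℤ) := by exact_mod_cast hodd
  rw [Int.even_sub, Int.even_mul, or_iff_right (Int.not_even_iff_odd.2 this)] at even_sub
  exact_mod_cast even_sub

theorem exists_isSymm_commute_ne_smul_one {n : Type*} [Fintype n] [DecidableEq n] [Nonempty n]
    (hodd : Odd (Nat.card G)) (hn : Even ((Fintype.card n + 1).choose 2))
    (A : G →* Matrix n n ℝ) (hA : ∀ g, A g ∈ orthogonalGroup n ℝ) :
    ∃ X : Matrix n n ℝ, X.IsSymm ∧ (∀ g, Commute X (A g)) ∧ ∀ c : ℝ, X ≠ c • 1 := by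
  let σ := congruenceRepresentation A
  let I : σ.invariants := ⟨⟨1, isSymm_one⟩, fun g => Subtype.ext <| by
    simpa [σ, congruenceRepresentation] using (mem_orthogonalGroup_iff _ _).1 (hA g)⟩
  have I_ne_zero : I ≠ 0 := fun h =>
    one_ne_zero (α := Matrix n n ℝ) <| congrArg (fun X : σ.invariants => X.1.1) h
  have even_inv : Even (finrank ℝ σ.invariants) := by
    rwa [even_finrank_invariants_iff hodd, finrank_symmetricMatrices]
  have ne_one : finrank ℝ σ.invariants ≠ 1 := fun h => by simp [h] at even_inv
  rw [Ne, finrank_eq_one_iff_of_nonzero' I I_ne_zero] at ne_one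
  push Not at ne_one
  obtain ⟨⟨⟨X, hX⟩, hXG⟩, hXI⟩ := ne_one
  refine ⟨X, hX, fun g => ?_, fun c hc => hXI c <| Subtype.ext <| Subtype.ext hc.symm⟩
  have h : A g * X * (A g)ᵀ = X := congrArg Subtype.val (hXG g)
  calc X * A g = A g * X * ((A g)ᵀ * A g) := by rw [← mul_assoc, h]
    _ = A g * X := by rw [(mem_orthogonalGroup_iff' _ _).1 (hA g), mul_one]

theorem exists_subrepresentation_ne_bot_ne_top [Nontrivial V] (hodd : Odd (Nat.card G))
    (hV : Even ((finrank ℝ V + 1).choose 2)) (ρ : Representation ℝ G V) :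
    ∃ W : Subrepresentation ρ, W ≠ ⊥ ∧ W ≠ ⊤ := by
  obtain ⟨b, hb⟩ := exists_basis_toMatrix_mem_unitaryGroup ρ
  have := Fin.pos_iff_nonempty.1 (finrank_pos (R := ℝ) (M := V))
  let A : G →* Matrix (Fin (finrank ℝ V)) (Fin (finrank ℝ V)) ℝ :=
    (LinearMap.toMatrixAlgEquiv b).toMonoidHom.comp ρ
  have hA (g : G) : toLin b b (A g) = ρ g := toLin_toMatrix b b (ρ g)
  obtain ⟨X, hX, hcomm, hscalar⟩ :=
    exists_isSymm_commute_ne_smul_one hodd (by rwa [Fintype.card_fin]) A hb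
  obtain ⟨μ, hμ⟩ := exists_hasEigenvalue_toLin b (X := X) hX
  refine exists_subrepresentation_ne_bot_ne_top_of_commute hμ (fun g => ?_) fun h => hscalar μ ?_
  · rw [← hA]
    exact (hcomm g).map (toLinAlgEquiv b)
  · simpa using congrArg (LinearMap.toMatrix b b) h

theorem exists_subrepresentation_finrank_eq_two (hodd : Odd (Nat.card G))
    (hV : finrank ℝ V = 4) (ρ : Representation ℝ G V) :
    ∃ W : Subrepresentation ρ, finrank ℝ W.toSubmodule = 2 := by
  have : Nontrivial V := nontrivial_of_finrank_pos (R := ℝ) (by omega)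
  obtain ⟨W, hW_bot, hW_top⟩ := exists_subrepresentation_ne_bot_ne_top hodd (by rw [hV]; decide) ρ
  rcases Nat.even_or_odd (finrank ℝ W.toSubmodule) with ⟨d, hd⟩ | hodd_W
  · have pos : finrank ℝ W.toSubmodule ≠ 0 := fun h =>
      hW_bot <| Subrepresentation.toSubmodule_injective <| Submodule.finrank_eq_zero.1 h
    have lt : finrank ℝ W.toSubmodule < 4 :=
      hV ▸ Submodule.finrank_lt fun h => hW_top <| Subrepresentation.toSubmodule_injective h
    exact ⟨W, by omega⟩
  · have pos : finrank ℝ W.toRepresentation.invariants ≠ 0 := fun h =>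
      Nat.not_even_iff_odd.2 hodd_W <|
        (even_finrank_invariants_iff hodd W.toRepresentation).1 (h ▸ Even.zero)
    have le : finrank ℝ W.toRepresentation.invariants ≤ finrank ℝ ρ.invariants := by
      rw [← Submodule.finrank_map_subtype_eq]
      refine Submodule.finrank_mono <| Submodule.map_le_iff_le_comap.2 fun w hw g => ?_
      exact congrArg Subtype.val (hw g)
    obtain ⟨d, hd⟩ := (even_finrank_invariants_iff hodd ρ).2 (by rw [hV]; decide)
    obtain ⟨U, hU, hU_two⟩ :=
      exists_submodule_le_finrank_eq (show 2 ≤ finrank ℝ ρ.invariants by omega)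
    exact ⟨⟨U, fun g v hv => by rwa [hU hv g]⟩, hU_two⟩

theorem exists_monoidHom_units_complex_ker_eq (hodd : Odd (Nat.card G))
    (hV : finrank ℝ V = 2) (ρ : Representation ℝ G V) : ∃ φ : G →* ℂˣ, φ.ker = ρ.ker := by
  obtain ⟨b, hb⟩ := hV ▸ exists_basis_toMatrix_mem_unitaryGroup ρ
  let A : G →* Matrix (Fin 2) (Fin 2) ℝ := (LinearMap.toMatrixAlgEquiv b).toMonoidHom.comp ρ
  have hdet (g : G) : (A g).det = 1 := by
    have h : (A g).det ^ Nat.card G = 1 := by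
      rw [← det_pow, ← map_pow, pow_card_eq_one', map_one, det_one]
    exact hodd.strictMono_pow.injective (h.trans (one_pow _).symm)
  let B : G →* specialOrthogonalGroup (Fin 2) ℝ :=
    A.codRestrict _ fun g => mem_specialOrthogonalGroup_iff.2 ⟨hb g, hdet g⟩
  refine ⟨(specialOrthogonalGroupToComplex.comp B).toHomUnits, Subgroup.ext fun g => ?_⟩
  rw [MonoidHom.mem_ker, MonoidHom.mem_ker, Units.ext_iff, MonoidHom.coe_toHomUnits, Units.val_one,
    MonoidHom.comp_apply, map_eq_one_iff _ specialOrthogonalGroupToComplex_injective,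
    Subtype.ext_iff]
  exact map_eq_one_iff (LinearMap.toMatrixAlgEquiv b) (LinearMap.toMatrixAlgEquiv b).injective

theorem exists_monoidHom_pair_ker_inf_ker_eq (hodd : Odd (Nat.card G))
    (hV : finrank ℝ V = 4) (ρ : Representation ℝ G V) :
    ∃ φ ψ : G →* ℂˣ, φ.ker ⊓ ψ.ker = ρ.ker := by
  obtain ⟨W, hW⟩ := exists_subrepresentation_finrank_eq_two hodd hV ρ
  have : NeZero (Nat.card G : ℝ) := ⟨Nat.cast_ne_zero.2 Nat.card_pos.ne'⟩
  obtain ⟨W', hcompl⟩ := exists_isCompl W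
  have hcompl' : IsCompl W.toSubmodule W'.toSubmodule := .of_eq
    (congrArg (·.toSubmodule) hcompl.inf_eq_bot) (congrArg (·.toSubmodule) hcompl.sup_eq_top)
  have hW' : finrank ℝ W'.toSubmodule = 2 := by
    have := Submodule.finrank_add_eq_of_isCompl hcompl'
    omega
  obtain ⟨φ, hφ⟩ := exists_monoidHom_units_complex_ker_eq hodd hW W.toRepresentation
  obtain ⟨ψ, hψ⟩ := exists_monoidHom_units_complex_ker_eq hodd hW' W'.toRepresentation
  exact ⟨φ, ψ, by rw [hφ, hψ, ker_toRepresentation_inf_ker_toRepresentation hcompl'.codisjoint]⟩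

end OddOrder

/-- Every finite subgroup of odd order of `PGL(4, ℝ)` is isomorphic to a direct product
of (at most) two cyclic groups. -/
theorem odd_subgroup_PGL4_prod_two_cyclic (H : Subgroup (PGL 4 ℝ)) [Finite H]
    (hodd : Odd (Nat.card H)) :
    ∃ m k : ℕ, Nonempty (H ≃* Multiplicative (ZMod m) × Multiplicative (ZMod k)) := by
  let f : H →* ProjGenLinGroup (Fin 4) ℝ := H.subtype
  obtain ⟨s, hs⟩ := exists_toPGL_comp_eq hodd f
  have s_injective : Function.Injective s := by
    have : Function.Injective (SpecialLinearGroup.toPGL.comp s) := hs ▸ H.subtype_injective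
    exact Function.Injective.of_comp (f := SpecialLinearGroup.toPGL) this
  let ρ : Representation ℝ H (Fin 4 → ℝ) :=
    (toLinAlgEquiv' : _ ≃ₐ[ℝ] _).toMonoidHom.comp (SpecialLinearGroup.coeMonoidHom.comp s)
  have ker_eq_bot : ρ.ker = ⊥ := (MonoidHom.ker_eq_bot_iff ρ).2 <|
    toLinAlgEquiv'.injective.comp <| Subtype.val_injective.comp s_injective
  obtain ⟨φ, ψ, hφψ⟩ := exists_monoidHom_pair_ker_inf_ker_eq hodd (by simp) ρ
  exact exists_mulEquiv_zmod_prod_zmod_of_ker_inf_ker_eq_bot (hφψ.trans ker_eq_bot)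
end

section
/- Let G be a group of odd order acting faithfully on a surface X with a G-equivariant quotient structure where the automorphism group decomposes as Aut(ℙ¹×ℙ¹) = (PGL(2,ℝ) × PGL(2,ℝ)) ⋊ ℤ/2ℤ. Then G is contained in PGL(2,ℝ) × PGL(2,ℝ), and hence G is isomorphic to a subgroup of a product of two cyclic groups of odd order; in particular G is a direct product of at most two cyclic groups. -/
open Matrix

/-!
An odd-order subgroup `H` of `A` lies in `N` because squaring kills `A ⧸ N` and permutes `H`. For
the same reason an odd-order subgroup of `PGL(2, ℝ)` lies in the image of `SL(2, ℝ)`: the square of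
the class of `g` is represented by `(det g)⁻¹ • g ^ 2`, which has determinant `1`.

A finite subgroup `K` of `SL(2, ℝ)` acts on the upper half-plane by isometries. In the hyperboloid
model a sum of points is a positive multiple of a point, and for the sum over a `K`-orbit this
point is fixed by `K`. On the stabilizer of `τ` the automorphy factor `g ↦ c τ + d` is an
injective character with values in `ℂ`, so `K` is cyclic.

Finally, a subgroup of a product of two finite cyclic groups is a quotient of a finite-index
subgroup of `ℤ × ℤ`, and the Smith normal form splits it into two cyclic factors.
-/

open Module UpperHalfPlane
open scoped MatrixGroups

theorem le_of_pow_mem_of_coprime_card {G : Type*} [Group G] {H K : Subgroup G} {n : ℕ}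
    (hn : (Nat.card H).Coprime n) (hpow : ∀ g ∈ H, g ^ n ∈ K) : H ≤ K := by
  intro g hg
  have hcop : n.Coprime (orderOf g) :=
    (hn.coprime_dvd_left (H.orderOf_dvd_natCard hg)).symm
  obtain ⟨m, hm⟩ := exists_pow_eq_self_of_coprime hcop
  exact hm ▸ K.pow_mem (hpow g hg) m

theorem exists_addEquiv_pi_zmod_of_surjective {ι M A : Type*} [Finite ι] [AddCommGroup M]
    [AddCommGroup A] [Finite A] (b : Basis ι ℤ M) {p : M →ₗ[ℤ] A} (hp : Function.Surjective p) :
    ∃ n : ι → ℕ, Nonempty (A ≃+ ∀ i, ZMod (n i)) := by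
  have := Fintype.ofFinite ι
  have := Free.of_basis b
  have := Module.Finite.of_basis b
  let e : (M ⧸ p.ker) ≃ₗ[ℤ] A := p.quotKerEquivOfSurjective hp
  have : Finite (M ⧸ p.ker) := Finite.of_equiv A e.symm.toEquiv
  exact ⟨_, ⟨e.symm.toAddEquiv.trans
    (p.ker.quotientEquivPiZMod b ((Submodule.finiteQuotient_iff p.ker).mp this))⟩⟩

theorem exists_submodule_addEquiv_pi_zmod_of_surjective {ι M A : Type*} [Finite ι] [AddCommGroup M]
    [AddCommGroup A] [Finite A] (b : Basis ι ℤ M) {p : M →ₗ[ℤ] A} (hp : Function.Surjective p)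
    (B : Submodule ℤ A) : ∃ n : ι → ℕ, Nonempty (B ≃+ ∀ i, ZMod (n i)) := by
  have := Free.of_basis b
  have := Module.Finite.of_basis b
  have : Finite (A ⧸ B) := Finite.of_surjective _ B.mkQ_surjective
  have hinj : Function.Injective ((B.comap p).mapQ B p le_rfl) := by
    rw [← LinearMap.ker_eq_bot, Submodule.ker_mapQ, Submodule.mkQ_map_self]
  have : Finite (M ⧸ B.comap p) := Finite.of_injective _ hinj
  have hrank : finrank ℤ (B.comap p) = Nat.card ι := by
    rw [(Submodule.finiteQuotient_iff _).mp this, finrank_eq_nat_card_basis b]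
  let b' : Basis ι ℤ (B.comap p) :=
    (finBasisOfFinrankEq ℤ (B.comap p) hrank).reindex (Finite.equivFin ι).symm
  exact exists_addEquiv_pi_zmod_of_surjective b'
    (p.submoduleComap_surjective_of_surjective B hp)

theorem exists_addEquiv_prod_zmod_of_injective {A A₁ A₂ : Type*} [AddGroup A] [AddCommGroup A₁]
    [AddCommGroup A₂] [Finite A₁] [Finite A₂] [IsAddCyclic A₁] [IsAddCyclic A₂]
    {f : A →+ A₁ × A₂} (hf : Function.Injective f) :
    ∃ m k : ℕ, Nonempty (A ≃+ ZMod m × ZMod k) := by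
  obtain ⟨a₁, h₁⟩ := IsAddCyclic.exists_generator (α := A₁)
  obtain ⟨a₂, h₂⟩ := IsAddCyclic.exists_generator (α := A₂)
  let p : ℤ × ℤ →ₗ[ℤ] A₁ × A₂ :=
    (LinearMap.toSpanSingleton ℤ A₁ a₁).prodMap (LinearMap.toSpanSingleton ℤ A₂ a₂)
  have hp : Function.Surjective p := Function.Surjective.prodMap h₁ h₂
  obtain ⟨n, ⟨e⟩⟩ := exists_submodule_addEquiv_pi_zmod_of_surjective (Basis.finTwoProd ℤ) hp
    (AddSubgroup.toIntSubmodule f.range)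
  exact ⟨n 0, n 1, ⟨(AddMonoidHom.ofInjective hf).trans
    (e.trans (RingEquiv.piFinTwo fun i => ZMod (n i)).toAddEquiv)⟩⟩

theorem exists_mulEquiv_prod_zmod_of_injective {G C₁ C₂ : Type*} [Group G] [Group C₁] [Group C₂]
    [Finite C₁] [Finite C₂] [IsCyclic C₁] [IsCyclic C₂] {f : G →* C₁ × C₂}
    (hf : Function.Injective f) :
    ∃ m k : ℕ, Nonempty (G ≃* Multiplicative (ZMod m) × Multiplicative (ZMod k)) := by
  let := IsCyclic.commGroup (α := C₁)
  let := IsCyclic.commGroup (α := C₂)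
  let f' : Additive G →+ Additive C₁ × Additive C₂ :=
    (AddEquiv.prodAdditive C₁ C₂).toAddMonoidHom.comp f.toAdditive
  obtain ⟨m, k, ⟨e⟩⟩ := exists_addEquiv_prod_zmod_of_injective (f := f') hf
  exact ⟨m, k, ⟨(AddEquiv.toMultiplicativeRight e).trans (MulEquiv.prodMultiplicative _ _)⟩⟩

theorem exists_mulEquiv_prod_zmod_of_isCyclic_range {G G₁ G₂ : Type*} [Group G] [Group G₁]
    [Group G₂] [Finite G] {f : G →* G₁ × G₂} (hf : Function.Injective f)
    (h₁ : IsCyclic ((MonoidHom.fst G₁ G₂).comp f).range)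
    (h₂ : IsCyclic ((MonoidHom.snd G₁ G₂).comp f).range) :
    ∃ m k : ℕ, Nonempty (G ≃* Multiplicative (ZMod m) × Multiplicative (ZMod k)) := by
  let f₁ := (MonoidHom.fst G₁ G₂).comp f
  let f₂ := (MonoidHom.snd G₁ G₂).comp f
  have : Finite f₁.range := .of_surjective _ f₁.rangeRestrict_surjective
  have : Finite f₂.range := .of_surjective _ f₂.rangeRestrict_surjective
  refine exists_mulEquiv_prod_zmod_of_injective (f := f₁.rangeRestrict.prod f₂.rangeRestrict)
    fun g h hgh => hf ?_
  obtain ⟨hfst, hsnd⟩ := Prod.ext_iff.mp hgh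
  exact Prod.ext (congrArg Subtype.val hfst) (congrArg Subtype.val hsnd)

theorem pow_card_mem_range_toPGL {n R : Type*} [Fintype n] [DecidableEq n] [CommRing R]
    (p : PGL(n, R)) : p ^ Fintype.card n ∈ (SpecialLinearGroup.toPGL (n := n) (R := R)).range := by
  obtain ⟨g, rfl⟩ := ProjGenLinGroup.mk_surjective p
  have hdet : (g ^ Fintype.card n * GeneralLinearGroup.scalar n g.det⁻¹).det = 1 := by
    ext
    simp
  refine ⟨⟨(g ^ Fintype.card n * GeneralLinearGroup.scalar n g.det⁻¹ : GL n R),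
    congrArg Units.val hdet⟩, ?_⟩
  rw [← map_pow, eq_comm]
  exact ProjGenLinGroup.mk_eq_mk_iff.mpr ⟨g.det⁻¹, Units.ext rfl⟩

-- The left-hand side is the pairing of `z` with the vector `(a, b, d)` of the hyperboloid model,
-- which is timelike by `hdisc`.
theorem exists_quadratic_div_im_eq_mul_cosh_dist {a b d : ℝ} (ha : 0 < a) (hdisc : b ^ 2 < a * d) :
    ∃ (c : ℍ) (r : ℝ), 0 < r ∧ ∀ z : ℍ,
      (a * (z.re ^ 2 + z.im ^ 2) - 2 * b * z.re + d) / (2 * z.im) = r * Real.cosh (dist z c) := by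
  have hr : 0 < √(a * d - b ^ 2) := Real.sqrt_pos.mpr (sub_pos.mpr hdisc)
  let c : ℍ := ⟨⟨b / a, √(a * d - b ^ 2) / a⟩, div_pos hr ha⟩
  have hre : c.re = b / a := rfl
  have him : c.im = √(a * d - b ^ 2) / a := rfl
  refine ⟨c, √(a * d - b ^ 2), hr, fun z => ?_⟩
  rw [cosh_dist', hre, him, div_pow (√_), Real.sq_sqrt (sub_pos.mpr hdisc).le]
  field_simp [z.im_ne_zero]
  ring

theorem exists_sum_cosh_dist_eq_mul_cosh_dist {ι : Type*} [Fintype ι] [Nonempty ι] (w : ι → ℍ) :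
    ∃ (c : ℍ) (r : ℝ), 0 < r ∧
      ∀ z : ℍ, ∑ i, Real.cosh (dist z (w i)) = r * Real.cosh (dist z c) := by
  have ha : 0 < ∑ i, 1 / (w i).im :=
    Finset.sum_pos (fun i _ => one_div_pos.mpr (w i).im_pos) Finset.univ_nonempty
  have hdisc : (∑ i, (w i).re / (w i).im) ^ 2 <
      (∑ i, 1 / (w i).im) * ∑ i, ((w i).re ^ 2 + (w i).im ^ 2) / (w i).im := by
    calc (∑ i, (w i).re / (w i).im) ^ 2
        ≤ (∑ i, 1 / (w i).im) * ∑ i, (w i).re ^ 2 / (w i).im :=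
          Finset.sum_sq_le_sum_mul_sum_of_sq_le_mul _
            (fun i _ => (one_div_pos.mpr (w i).im_pos).le)
            (fun i _ => div_nonneg (sq_nonneg _) (w i).im_pos.le) (fun i _ => (by ring : _ = _).le)
      _ < _ := by
          gcongr with i
          · exact Finset.univ_nonempty
          · exact lt_add_of_pos_right _ (pow_pos (w i).im_pos 2)
  obtain ⟨c, r, hr, hc⟩ := exists_quadratic_div_im_eq_mul_cosh_dist ha hdisc
  refine ⟨c, r, hr, fun z => ?_⟩
  rw [← hc, Finset.sum_mul, Finset.mul_sum, Finset.sum_mul, ← Finset.sum_sub_distrib,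
    ← Finset.sum_add_distrib, Finset.sum_div]
  refine Finset.sum_congr rfl fun i _ => ?_
  rw [cosh_dist']
  field_simp [z.im_ne_zero, (w i).im_ne_zero]
  ring

theorem exists_forall_smul_eq_self (G : Type*) [Group G] [Finite G] [MulAction G ℍ]
    [IsIsometricSMul G ℍ] : ∃ c : ℍ, ∀ g : G, g • c = c := by
  have := Fintype.ofFinite G
  obtain ⟨c, r, hr, hsum⟩ := exists_sum_cosh_dist_eq_mul_cosh_dist fun g : G => g • I
  refine ⟨c, fun g => ?_⟩
  have hinv : r * Real.cosh (dist (g • c) c) = r * Real.cosh (dist c c) := by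
    rw [← hsum, ← hsum, ← Equiv.sum_comp (Equiv.mulLeft g)]
    simp only [Equiv.coe_mulLeft, mul_smul, dist_smul]
  have hdist : dist (g • c) c = dist c c :=
    Real.cosh_injOn dist_nonneg dist_nonneg (mul_left_cancel₀ hr.ne' hinv)
  rwa [dist_self, dist_eq_zero] at hdist

/-- The automorphy factor `(a b; c d) ↦ c τ + d` as a character of the stabilizer of `τ`. It takes
values in `ℂ` rather than `ℂˣ` so that `isCyclic_of_injective_ringHom` applies to it. -/
noncomputable def stabilizerDenom (τ : ℍ) : MulAction.stabilizer SL(2, ℝ) τ →* ℂ where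
  toFun g := denom (g : SL(2, ℝ)) τ
  map_one' := by simp [denom]
  map_mul' g h := by
    have hfix : (h : GL (Fin 2) ℝ) • τ = τ := h.2
    simpa [hfix, σ] using denom_cocycle_σ (g : SL(2, ℝ)) (h : SL(2, ℝ)) τ

theorem stabilizerDenom_injective (τ : ℍ) : Function.Injective (stabilizerDenom τ) := by
  refine (injective_iff_map_eq_one _).mpr fun ⟨g, hg⟩ hdenom => ?_
  have hfix : g • τ = τ := hg
  have hcd : (g 1 0 : ℂ) * τ + g 1 1 = 1 := hdenom
  have hc : g 1 0 = 0 := by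
    simpa [τ.im_ne_zero] using congrArg Complex.im hcd
  have hd : g 1 1 = 1 := by
    simpa [hc] using hcd
  have ha : g 0 0 = 1 := by
    have hdet := g.det_coe
    rwa [det_fin_two, hc, hd, mul_zero, sub_zero, mul_one] at hdet
  have hb : g 0 1 = 0 := by
    simpa [hfix, ha, hc, hd] using coe_specialLinearGroup_apply g τ
  ext i j
  fin_cases i <;> fin_cases j <;> simp [ha, hb, hc, hd]

theorem isCyclic_subgroup_SL_two_real (K : Subgroup SL(2, ℝ)) [Finite K] : IsCyclic K := by
  have : IsIsometricSMul K ℍ := ⟨fun g => isometry_smul ℍ (g : SL(2, ℝ))⟩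
  obtain ⟨τ, hτ⟩ := exists_forall_smul_eq_self K
  have hle : K ≤ MulAction.stabilizer SL(2, ℝ) τ := fun g hg => hτ ⟨g, hg⟩
  exact isCyclic_of_injective_ringHom ((stabilizerDenom τ).comp (Subgroup.inclusion hle))
    ((stabilizerDenom_injective τ).comp (Subgroup.inclusion_injective hle))

theorem finite_comap_of_finite_ker {G G' : Type*} [Group G] [Group G'] (f : G →* G')
    [Finite f.ker] (K : Subgroup G') [Finite K] : Finite (K.comap f) := by
  refine (f.subgroupComap K).finite_iff_finite_ker_range.mpr ⟨?_, inferInstance⟩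
  let toKer : (f.subgroupComap K).ker → f.ker := fun g => ⟨g, congrArg Subtype.val g.2⟩
  exact Finite.of_injective toKer fun g h hgh =>
    Subtype.ext (Subtype.ext (congrArg (fun x : f.ker => (x : G)) hgh))

theorem finite_center_specialLinearGroup {n R : Type*} [Fintype n] [DecidableEq n] [CommRing R]
    [IsDomain R] : Finite (Subgroup.center (SpecialLinearGroup n R)) :=
  have : NeZero (max (Fintype.card n) 1) := ⟨by positivity⟩
  Finite.of_equiv _ SpecialLinearGroup.center_equiv_rootsOfUnity.symm.toEquiv

theorem isCyclic_subgroup_PGL_two_real_of_odd_card (K : Subgroup PGL(2, ℝ))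
    (hodd : Odd (Nat.card K)) : IsCyclic K := by
  have : Finite K := Nat.finite_of_card_ne_zero hodd.pos.ne'
  have hK : K ≤ SpecialLinearGroup.toPGL.range :=
    le_of_pow_mem_of_coprime_card hodd.coprime_two_right fun g _ => by
      simpa using pow_card_mem_range_toPGL g
  let L : Subgroup SL(2, ℝ) := K.comap SpecialLinearGroup.toPGL
  have : Finite (SpecialLinearGroup.toPGL (n := Fin 2) (R := ℝ)).ker :=
    SpecialLinearGroup.toPGL_ker (n := Fin 2) (R := ℝ) ▸ finite_center_specialLinearGroup
  have : Finite L := finite_comap_of_finite_ker _ K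
  have : IsCyclic L := isCyclic_subgroup_SL_two_real L
  rw [← Subgroup.map_comap_eq_self hK]
  exact isCyclic_of_surjective _ (SpecialLinearGroup.toPGL.subgroupMap_surjective L)

theorem odd_subgroup_of_aut_P1xP1_general {A : Type*} [Group A] (N : Subgroup A) [N.Normal]
    (f : N →* PGL 2 ℝ × PGL 2 ℝ) (hf : Function.Injective f) (H : Subgroup A)
    (hodd : Odd (Nat.card H)) (hindex : (Nat.card H).Coprime N.index) :
    H ≤ N ∧
      ∃ m k : ℕ, Nonempty (H ≃* Multiplicative (ZMod m) × Multiplicative (ZMod k)) := by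
  have hle : H ≤ N := le_of_pow_mem_of_coprime_card hindex fun g _ => N.pow_index_mem g
  have : Finite H := Nat.finite_of_card_ne_zero hodd.pos.ne'
  let φ : H →* PGL 2 ℝ × PGL 2 ℝ := f.comp (Subgroup.inclusion hle)
  have hφ : Function.Injective φ := hf.comp (Subgroup.inclusion_injective hle)
  have isCyclic_range (ψ : H →* PGL 2 ℝ) : IsCyclic ψ.range :=
    isCyclic_subgroup_PGL_two_real_of_odd_card ψ.range (hodd.of_dvd_nat (Subgroup.card_range_dvd ψ))
  exact ⟨hle, exists_mulEquiv_prod_zmod_of_isCyclic_range hφ (isCyclic_range _) (isCyclic_range _)⟩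

/-- Let `A` be a group (such as `Aut(ℙ¹×ℙ¹) = (PGL(2,ℝ) × PGL(2,ℝ)) ⋊ ℤ/2ℤ`) containing a
normal subgroup `N ≅ PGL(2,ℝ) × PGL(2,ℝ)` with quotient `ℤ/2ℤ`. Then every finite
subgroup `H` of `A` of odd order is contained in `N ≅ PGL(2,ℝ) × PGL(2,ℝ)`, and `H` is
isomorphic to a direct product of (at most) two cyclic groups. -/
theorem odd_subgroup_of_aut_P1xP1 {A : Type*} [Group A]
    (N : Subgroup A) [N.Normal]
    (e : N ≃* (PGL 2 ℝ × PGL 2 ℝ))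
    (hquot : Nonempty ((A ⧸ N) ≃* Multiplicative (ZMod 2)))
    (H : Subgroup A) [Finite H] (hodd : Odd (Nat.card H)) :
    H ≤ N ∧
      ∃ m k : ℕ, Nonempty (H ≃* Multiplicative (ZMod m) × Multiplicative (ZMod k)) := by
  have hindex : N.index = 2 := by
    simpa [Subgroup.index] using Nat.card_congr hquot.some.toEquiv
  exact odd_subgroup_of_aut_P1xP1_general N e.toMonoidHom e.injective H hodd
    (hindex ▸ hodd.coprime_two_right)
end
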